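/- Let A ∈ ℝ^{m×n}, let k be a positive integer with 2k ≤ n, let δ₁ ∈ (0,1) be a restricted isometry constant of order k for A, and let δ₂ ∈ (0,1) be a restricted isometry constant of order 2k for A. Let x̂ ∈ ℝ^n be k-sparse, ν ∈ ℝ^m, and y = Ax̂ + ν. Let v ∈ ℝ^n be k-sparse, and let z* ∈ ℝ^n be a minimizer of ‖y − Az‖₂ over all z ∈ ℝ^n with supp(z) ⊆ supp(v). Then ‖z* − x̂‖₂ ≤ (1/√(1 − δ₂²)) ‖x̂ − v‖₂ + (√(1 + δ₁)/(1 − δ₂)) ‖ν‖₂. -/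

import Mathlib

/-!
Let `d = zstar - xhat`, and let `a` and `b` be its restrictions to `supp v` and to the complement.
Outside `supp v` both `zstar` and `v` vanish, so `b` agrees there with `v - xhat` and
`‖b‖ ≤ ‖xhat - v‖`. Optimality of `zstar` says that the residual `ν - A d` is orthogonal to `A a`
(`dot_residual_eq_zero`), hence `⟨A d, A a⟩ = ⟨ν, A a⟩ ≤ √(1 + δ1) ‖ν‖ ‖a‖`. As `d` and `a` are both
supported on the union of `supp v` and `supp xhat`, which has at most `2k` elements, polarizing the
restricted isometry inequalities (`dot_sub_dot_mulVec_le`) gives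
`‖a‖² = ⟨d, a⟩ ≤ ⟨A d, A a⟩ + δ2 ‖d‖ ‖a‖`. Therefore `‖a‖ ≤ δ2 ‖d‖ + √(1 + δ1) ‖ν‖`, and solving the
quadratic inequality obtained from `‖d‖² = ‖a‖² + ‖b‖²` for `‖d‖` (`le_of_sq_le`) yields the claim.
-/


open Matrix Filter Topology

/-- Euclidean (ℓ₂) norm of a vector in ℝ^n. -/
noncomputable def norm2 {n : ℕ} (x : Fin n → ℝ) : ℝ := Real.sqrt (∑ i, x i ^ 2)

/-- Euclidean inner product. -/
def dot {n : ℕ} (u v : Fin n → ℝ) : ℝ := ∑ i, u i * v i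

/-- Support of a vector. -/
def supp {n : ℕ} (x : Fin n → ℝ) : Set (Fin n) := {i | x i ≠ 0}

/-- δ ∈ (0,1) is a restricted isometry constant of order q for A. -/
def IsRIC {m n : ℕ} (A : Matrix (Fin m) (Fin n) ℝ) (q : ℕ) (δ : ℝ) : Prop :=
  0 < δ ∧ δ < 1 ∧
    ∀ x : Fin n → ℝ, (supp x).ncard ≤ q →
      (1 - δ) * norm2 x ^ 2 ≤ norm2 (A.mulVec x) ^ 2 ∧
      norm2 (A.mulVec x) ^ 2 ≤ (1 + δ) * norm2 x ^ 2

/-- σ is the largest singular value (spectral norm) of A: it bounds ‖Av‖₂/‖v‖₂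
and this bound is attained. -/
def IsMaxSingularValue {m n : ℕ} (A : Matrix (Fin m) (Fin n) ℝ) (σ : ℝ) : Prop :=
  0 ≤ σ ∧ (∀ v : Fin n → ℝ, norm2 (A.mulVec v) ≤ σ * norm2 v) ∧
    ∃ v : Fin n → ℝ, v ≠ 0 ∧ norm2 (A.mulVec v) = σ * norm2 v

/-- For m ≤ n, σ is the smallest singular value of A, i.e. σ² is the smallest
eigenvalue of A Aᵀ: σ is the infimum of ‖Aᵀu‖₂/‖u‖₂ and it is attained. -/
def IsMinSingularValue {m n : ℕ} (A : Matrix (Fin m) (Fin n) ℝ) (σ : ℝ) : Prop :=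
  0 ≤ σ ∧ (∀ u : Fin m → ℝ, σ * norm2 u ≤ norm2 (Aᵀ.mulVec u)) ∧
    ∃ u : Fin m → ℝ, u ≠ 0 ∧ norm2 (Aᵀ.mulVec u) = σ * norm2 u

/-- w is a hard k-thresholding of z with associated index set S*. -/
def IsHardThresholding {n : ℕ} (k : ℕ) (z w : Fin n → ℝ) (S : Set (Fin n)) : Prop :=
  S.ncard = k ∧ (∀ i ∈ S, w i = z i) ∧ (∀ i ∉ S, w i = 0) ∧
    ∀ i ∈ S, ∀ j ∉ S, |z j| ≤ |z i|

lemma norm2_nonneg {n : ℕ} (x : Fin n → ℝ) : 0 ≤ norm2 x := Real.sqrt_nonneg _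

lemma norm2_sq {n : ℕ} (x : Fin n → ℝ) : norm2 x ^ 2 = x ⬝ᵥ x := by
  rw [norm2, Real.sq_sqrt (Finset.sum_nonneg fun i _ => sq_nonneg _)]
  simp [dotProduct, sq]

lemma dot_le_norm2_mul {n : ℕ} (x y : Fin n → ℝ) : x ⬝ᵥ y ≤ norm2 x * norm2 y := by
  refine Real.sum_mul_le_sqrt_mul_sqrt _ _ _

/-- If `r` cannot be shortened by subtracting multiples of `p`, then `r` is orthogonal to `p`. -/
lemma dot_residual_eq_zero {m : ℕ} (r p : Fin m → ℝ)
    (h : ∀ t : ℝ, norm2 r ≤ norm2 (r - t • p)) : r ⬝ᵥ p = 0 := by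
  have hq : ∀ t : ℝ, 0 ≤ (p ⬝ᵥ p) * (t * t) + (-2 * (r ⬝ᵥ p)) * t + 0 := by
    intro t
    have h1 := pow_le_pow_left₀ (norm2_nonneg r) (h t) 2
    rw [norm2_sq, norm2_sq] at h1
    simp only [sub_dotProduct, dotProduct_sub, smul_dotProduct, dotProduct_smul, smul_eq_mul,
      dotProduct_comm p r] at h1
    linarith
  have hd := discrim_le_zero hq
  rw [discrim] at hd
  nlinarith [sq_nonneg (r ⬝ᵥ p)]

/-- Polarized restricted isometry property: `A` nearly preserves the inner product of two vectors
that are supported on a common set of at most `q` indices. -/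
lemma dot_sub_dot_mulVec_le {m n q : ℕ} {A : Matrix (Fin m) (Fin n) ℝ} {δ : ℝ}
    (hA : IsRIC A q δ) {T : Set (Fin n)} (hT : T.ncard ≤ q) (u w : Fin n → ℝ)
    (hu : supp u ⊆ T) (hw : supp w ⊆ T) :
    u ⬝ᵥ w - A.mulVec u ⬝ᵥ A.mulVec w ≤ δ * (norm2 u * norm2 w) := by
  obtain ⟨hδ, -, hA⟩ := hA
  have hcomb : ∀ s t : ℝ, (supp (s • u + t • w)).ncard ≤ q := by
    intro s t
    refine (Set.ncard_le_ncard ?_ T.toFinite).trans hT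
    intro i hi
    by_contra hiT
    have h1 : u i = 0 := by_contra fun h => hiT (hu h)
    have h2 : w i = 0 := by_contra fun h => hiT (hw h)
    exact hi (by simp [h1, h2])
  have hu0 := norm2_nonneg u
  have hw0 := norm2_nonneg w
  -- Rescaling to `‖w‖ u ± ‖u‖ w` balances the two lengths and makes the bound a product.
  have h1 := (hA _ (hcomb (norm2 w) (norm2 u))).1
  have h2 := (hA _ (hcomb (norm2 w) (-norm2 u))).2
  have eu := norm2_sq u
  have ew := norm2_sq w
  rw [norm2_sq, norm2_sq] at h1 h2
  simp only [mulVec_add, mulVec_smul, add_dotProduct, dotProduct_add, smul_dotProduct,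
    dotProduct_smul, smul_eq_mul, dotProduct_comm w u,
    dotProduct_comm (A.mulVec w) (A.mulVec u), ← eu, ← ew] at h1 h2
  have key : norm2 u * norm2 w * (u ⬝ᵥ w - A.mulVec u ⬝ᵥ A.mulVec w)
      ≤ norm2 u * norm2 w * (δ * (norm2 u * norm2 w)) := by
    linarith
  rcases (mul_nonneg hu0 hw0).eq_or_lt with h0 | hpos
  · -- If `u` or `w` is zero, both sides vanish.
    have hz : ∀ x : Fin n → ℝ, norm2 x = 0 → x = 0 := by
      intro x hx
      have := norm2_sq x
      rw [hx] at this
      exact dotProduct_self_eq_zero.1 (by linarith)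
    rw [← h0]
    rcases mul_eq_zero.1 h0.symm with h | h <;> simp [hz _ h]
  · exact le_of_mul_le_mul_left key hpos

/-- Solving the quadratic inequality `D² ≤ (δ D + e)² + B²` for `D`. -/
lemma le_of_sq_le {D B e δ : ℝ} (hB : 0 ≤ B) (he : 0 ≤ e) (h0 : 0 < δ) (h1 : δ < 1)
    (h : D ^ 2 ≤ (δ * D + e) ^ 2 + B ^ 2) :
    D ≤ 1 / Real.sqrt (1 - δ ^ 2) * B + e / (1 - δ) := by
  have hp : 0 < 1 - δ ^ 2 := by nlinarith
  obtain ⟨s, hs⟩ : ∃ s, s = Real.sqrt (1 - δ ^ 2) := ⟨_, rfl⟩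
  have hs0 : 0 < s := hs ▸ Real.sqrt_pos.2 hp
  have hs2 : s ^ 2 = 1 - δ ^ 2 := by rw [hs, Real.sq_sqrt hp.le]
  rw [← hs]
  have hsB : 0 ≤ s * B := by positivity
  -- Completing the square: `(s² D - δ e)² ≤ e² + s² B² ≤ (e + s B)²`.
  have h2 : (s ^ 2 * D - δ * e) ^ 2 ≤ (e + s * B) ^ 2 := by
    have h3 := mul_le_mul_of_nonneg_left h hp.le
    have h4 : (s * B) ^ 2 = (1 - δ ^ 2) * B ^ 2 := by rw [mul_pow, hs2]
    have h5 : 0 ≤ e * (s * B) := by positivity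
    rw [hs2]
    nlinarith
  have h3 := abs_le_of_sq_le_sq h2 (by positivity)
  have h4 : s ^ 2 * D ≤ (1 + δ) * e + s * B := by linarith [le_of_abs_le h3]
  have h5 : 1 / s * B + e / (1 - δ) = ((1 + δ) * e + s * B) / s ^ 2 := by
    have : 1 - δ ≠ 0 := by linarith
    have e1 : e / (1 - δ) = (1 + δ) * e / s ^ 2 := by
      rw [div_eq_div_iff this (by positivity), hs2]
      ring
    rw [e1]
    field_simp
    ring
  rw [h5, le_div_iff₀ (by positivity)]
  linarith

/-- Lemma 4.2: property of the pursuit step. -/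
theorem stmt_14 {m n : ℕ} (A : Matrix (Fin m) (Fin n) ℝ)
    (k : ℕ) (hk : 0 < k) (hkn : 2 * k ≤ n)
    (δ1 δ2 : ℝ) (hδ1 : IsRIC A k δ1) (hδ2 : IsRIC A (2 * k) δ2)
    (xhat : Fin n → ℝ) (hxhat : (supp xhat).ncard ≤ k)
    (ν : Fin m → ℝ) (y : Fin m → ℝ) (hy : y = A.mulVec xhat + ν)
    (v : Fin n → ℝ) (hv : (supp v).ncard ≤ k)
    (zstar : Fin n → ℝ) (hzsupp : supp zstar ⊆ supp v)
    (hzmin : ∀ z : Fin n → ℝ, supp z ⊆ supp v →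
      norm2 (y - A.mulVec zstar) ≤ norm2 (y - A.mulVec z)) :
    norm2 (zstar - xhat) ≤
      1 / Real.sqrt (1 - δ2 ^ 2) * norm2 (xhat - v) +
      Real.sqrt (1 + δ1) / (1 - δ2) * norm2 ν := by
  classical
  have hδ2' := hδ2
  obtain ⟨hδ0, hδlt, -⟩ := hδ2'
  obtain ⟨hδ10, -, hδ1⟩ := hδ1
  obtain ⟨d, hd⟩ : ∃ d, d = zstar - xhat := ⟨_, rfl⟩
  obtain ⟨a, ha⟩ : ∃ a : Fin n → ℝ, a = fun i => if v i = 0 then 0 else d i := ⟨_, rfl⟩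
  rw [← hd]
  have hav : supp a ⊆ supp v := by
    intro i hi hvi
    exact hi (by simp [ha, hvi])
  have hdT : supp d ⊆ supp v ∪ supp xhat := by
    intro i hi
    by_contra hiT
    have h1 : zstar i = 0 := by_contra fun h => hiT (Or.inl (hzsupp h))
    have h2 : xhat i = 0 := by_contra fun h => hiT (Or.inr h)
    exact hi (by simp [hd, h1, h2])
  have hT : (supp v ∪ supp xhat).ncard ≤ 2 * k := (Set.ncard_union_le _ _).trans (by omega)
  have hres : y - A.mulVec zstar = ν - A.mulVec d := by
    rw [hy, hd, mulVec_sub]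
    abel
  have horth : (ν - A.mulVec d) ⬝ᵥ A.mulVec a = 0 := by
    refine dot_residual_eq_zero _ _ fun t => ?_
    have h := hzmin (zstar + t • a) (by
      intro i hi hvi
      have h1 : zstar i = 0 := by_contra fun h => hzsupp h hvi
      have h2 : a i = 0 := by_contra fun h => hav h hvi
      exact hi (by simp [h1, h2]))
    rwa [mulVec_add, mulVec_smul, ← sub_sub, hres] at h
  have hip := dot_sub_dot_mulVec_le hδ2 hT d a hdT (hav.trans Set.subset_union_left)
  have hda : d ⬝ᵥ a = norm2 a ^ 2 := by
    rw [norm2_sq]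
    refine Finset.sum_congr rfl fun i _ => ?_
    by_cases h : v i = 0 <;> simp [ha, h]
  have hAa : norm2 (A.mulVec a) ≤ Real.sqrt (1 + δ1) * norm2 a := by
    refine le_of_sq_le_sq ?_ (mul_nonneg (Real.sqrt_nonneg _) (norm2_nonneg a))
    rw [mul_pow, Real.sq_sqrt (by linarith)]
    exact (hδ1 a ((Set.ncard_le_ncard hav (Set.toFinite _)).trans hv)).2
  have hνa : ν ⬝ᵥ A.mulVec a ≤ norm2 ν * (Real.sqrt (1 + δ1) * norm2 a) :=
    (dot_le_norm2_mul _ _).trans (mul_le_mul_of_nonneg_left hAa (norm2_nonneg ν))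
  rw [sub_dotProduct] at horth
  have he : 0 ≤ Real.sqrt (1 + δ1) * norm2 ν := mul_nonneg (Real.sqrt_nonneg _) (norm2_nonneg ν)
  have hbound : 0 ≤ δ2 * norm2 d + Real.sqrt (1 + δ1) * norm2 ν :=
    add_nonneg (mul_nonneg hδ0.le (norm2_nonneg d)) he
  have hale : norm2 a ≤ δ2 * norm2 d + Real.sqrt (1 + δ1) * norm2 ν := by
    rcases (norm2_nonneg a).eq_or_lt with h0 | hpos
    · rw [← h0]
      exact hbound
    · refine le_of_mul_le_mul_left ?_ hpos
      nlinarith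
  -- Pythagoras, with the part of `d` outside `supp v` bounded by `xhat - v`.
  have hpyth : norm2 d ^ 2 ≤ norm2 a ^ 2 + norm2 (xhat - v) ^ 2 := by
    simp only [norm2_sq, dotProduct, ← Finset.sum_add_distrib]
    refine Finset.sum_le_sum fun i _ => ?_
    by_cases h : v i = 0
    · have h1 : zstar i = 0 := by_contra fun h' => hzsupp h' h
      simp [ha, hd, h, h1]
    · simp [ha, h, mul_self_nonneg]
  have hfin := le_of_sq_le (norm2_nonneg (xhat - v)) he hδ0 hδlt
    (hpyth.trans (add_le_add_left (pow_le_pow_left₀ (norm2_nonneg a) hale 2) _))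
  rwa [mul_div_right_comm] at hfin
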